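/- Let X be a complex Hilbert space, let A1, A2 : X → X be compact self-adjoint bounded linear operators, and let r ∈ ℕ. Then the following are equivalent: (1) the subspace of X spanned by all eigenvectors of A2 − A1 corresponding to negative eigenvalues has dimension at most r; (2) there exists a subspace V ⊆ X with dim V ≤ r such that the inner product ⟨(A2 − A1)v, v⟩ is real and nonnegative for every v in the orthogonal complement V⊥ of V. -/

import Mathlib

/-!
Put `K = A2 - A1`, a compact self-adjoint operator, let `N` be the span of its eigenvectors with
negative eigenvalues and `P` the span of those with nonnegative eigenvalues. Eigenspaces of `K` are
mutually orthogonal, so `⟪K v, v⟫ = ∑ μ ‖v_μ‖²` for a finite sum `v = ∑ v_μ` of eigenvectors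
(`exists_eigen_decomposition`). Hence the quadratic form is negative at every nonzero vector of `N`
and nonnegative on `P`.

If `dim N ≤ r`, take `V = N`: by the spectral theorem `Nᗮ` lies in the closure of `P`
(`negSpan_orthogonal_le`), and nonnegativity passes to the closure by continuity.

Conversely, if the form is nonnegative on `Vᗮ`, then `N ⊓ Vᗮ = ⊥`, so the orthogonal projection
onto `V` is injective on `N`, which gives `dim N ≤ dim V`.
-/

open scoped InnerProductSpace

open Module.End in
/-- On an algebraic sum of eigenspaces with real eigenvalues in `{μ | p μ}`, the quadratic form of
a symmetric operator `T` is diagonal: it is the sum of `μ ‖f μ‖²`, where `f μ` is the component of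
`v` in the eigenspace of `μ`. -/
theorem exists_eigen_decomposition {X : Type*} [NormedAddCommGroup X] [InnerProductSpace ℂ X]
    {T : X →ₗ[ℂ] X} (hT : T.IsSymmetric) (p : ℝ → Prop) {v : X}
    (hv : v ∈ ⨆ (μ : ℝ) (_ : p μ), eigenspace T (μ : ℂ)) :
    ∃ f : {μ : ℝ // p μ} →₀ X,
      (∀ μ : {μ : ℝ // p μ}, f μ ∈ eigenspace T ((μ : ℝ) : ℂ)) ∧
      v = ∑ μ ∈ f.support, f μ ∧
      (⟪T v, v⟫_ℂ).re = ∑ μ ∈ f.support, (μ : ℝ) * ‖f μ‖ ^ 2 := by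
  rw [iSup_subtype', Submodule.mem_iSup_iff_exists_finsupp] at hv
  obtain ⟨f, hf, rfl⟩ := hv
  refine ⟨f, hf, rfl, ?_⟩
  have hO : OrthogonalFamily ℂ (fun μ : {μ : ℝ // p μ} => eigenspace T ((μ : ℝ) : ℂ))
      fun μ => (eigenspace T ((μ : ℝ) : ℂ)).subtypeₗᵢ :=
    hT.orthogonalFamily_eigenspaces.comp (f := fun μ : {μ : ℝ // p μ} => ((μ : ℝ) : ℂ))
      (Complex.ofReal_injective.comp Subtype.coe_injective)
  have h1 : T (f.sum fun _ x => x) = ∑ μ ∈ f.support, (((μ : ℝ) : ℂ) • f μ) := by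
    rw [Finsupp.sum, map_sum]
    exact Finset.sum_congr rfl fun μ _ => mem_eigenspace_iff.1 (hf μ)
  have h2 : ⟪∑ μ ∈ f.support, ((μ : ℝ) : ℂ) • f μ, ∑ μ ∈ f.support, f μ⟫_ℂ =
      ∑ μ ∈ f.support, ⟪((μ : ℝ) : ℂ) • f μ, f μ⟫_ℂ :=
    hO.inner_sum (fun μ => ((μ : ℝ) : ℂ) • ⟨f μ, hf μ⟩) (fun μ => ⟨f μ, hf μ⟩) f.support
  rw [h1, Finsupp.sum, h2, Complex.re_sum]
  refine Finset.sum_congr rfl fun μ _ => ?_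
  rw [inner_smul_left, inner_self_eq_norm_sq_to_K, Complex.conj_ofReal]
  norm_cast
  exact Complex.re_ofReal_mul _ _

open Module.End in
/-- Vectors orthogonal to the eigenvectors with negative eigenvalues are limits of sums of
eigenvectors with nonnegative eigenvalues. -/
theorem negSpan_orthogonal_le {X : Type*} [NormedAddCommGroup X] [InnerProductSpace ℂ X]
    [CompleteSpace X] {K : X →L[ℂ] X} (hc : IsCompactOperator K)
    (hs : (K : X →ₗ[ℂ] X).IsSymmetric) :
    (⨆ (μ : ℝ) (_ : μ < 0), eigenspace (K : X →ₗ[ℂ] X) (μ : ℂ))ᗮ ≤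
      (⨆ (μ : ℝ) (_ : 0 ≤ μ), eigenspace (K : X →ₗ[ℂ] X) (μ : ℂ)).topologicalClosure := by
  set N := ⨆ (μ : ℝ) (_ : μ < 0), eigenspace (K : X →ₗ[ℂ] X) (μ : ℂ) with hN
  set P := ⨆ (μ : ℝ) (_ : 0 ≤ μ), eigenspace (K : X →ₗ[ℂ] X) (μ : ℂ) with hP
  have hPN : P ≤ Nᗮ := by
    rw [← Submodule.isOrtho_iff_le]
    simp only [hN, hP, Submodule.isOrtho_iSup_left, Submodule.isOrtho_iSup_right]
    intro μ hμ ν hν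
    refine hs.orthogonalFamily_eigenspaces.isOrtho fun h => ?_
    exact absurd (Complex.ofReal_injective h) (by intro h; linarith)
  have hall : ⨆ μ, eigenspace (K : X →ₗ[ℂ] X) μ ≤ N ⊔ P := by
    refine iSup_le fun μ => ?_
    by_cases h : eigenspace (K : X →ₗ[ℂ] X) μ = ⊥
    · simp [h]
    -- a genuine eigenvalue is real, hence negative or nonnegative
    obtain ⟨t, rfl⟩ := Complex.conj_eq_iff_real.1 (hs.conj_eigenvalue_eq_self h)
    rcases lt_or_ge t 0 with ht | ht
    · exact le_sup_of_le_left (le_iSup₂_of_le t ht le_rfl)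
    · exact le_sup_of_le_right (le_iSup₂_of_le t ht le_rfl)
  have hbot : Nᗮ ⊓ Pᗮ = ⊥ := by
    rw [Submodule.inf_orthogonal, eq_bot_iff,
      ← ContinuousLinearMap.orthogonalComplement_iSup_eigenspaces_eq_bot hc hs]
    exact Submodule.orthogonal_le hall
  intro v hv
  obtain ⟨y, hy, z, hz, rfl⟩ := P.topologicalClosure.exists_add_mem_mem_orthogonal v
  have hyN : y ∈ Nᗮ := P.topologicalClosure_minimal hPN N.isClosed_orthogonal hy
  have hzN : z ∈ Nᗮ := by simpa using Nᗮ.sub_mem hv hyN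
  have hz0 : z ∈ Nᗮ ⊓ Pᗮ := ⟨hzN, Submodule.orthogonal_le P.le_topologicalClosure hz⟩
  rw [hbot, Submodule.mem_bot] at hz0
  simpa [hz0] using hy

/-- **Lemma 4.4.** Let `X` be a complex Hilbert space, `A1, A2 : X → X` compact
self-adjoint bounded linear operators and `r ∈ ℕ`.  Then the span of all eigenvectors
of `A2 - A1` corresponding to negative eigenvalues has dimension at most `r` iff there is
a subspace `V ⊆ X` with `dim V ≤ r` such that `⟨(A2 - A1) v, v⟩` is real and nonnegative
for all `v ∈ Vᗮ`. -/
theorem stmt_2 {X : Type*}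
    [NormedAddCommGroup X] [InnerProductSpace ℂ X] [CompleteSpace X]
    (A1 A2 : X →L[ℂ] X)
    (hA1c : IsCompactOperator A1) (hA2c : IsCompactOperator A2)
    (hA1s : IsSelfAdjoint A1) (hA2s : IsSelfAdjoint A2) (r : ℕ) :
    Module.rank ℂ
        ↥(⨆ (μ : ℝ) (_ : μ < 0),
            Module.End.eigenspace ((A2 - A1 : X →L[ℂ] X) : X →ₗ[ℂ] X) (μ : ℂ)) ≤ r ↔
      ∃ V : Submodule ℂ X, Module.rank ℂ ↥V ≤ r ∧
        ∀ v ∈ Vᗮ, ∃ t : ℝ, 0 ≤ t ∧ ⟪(A2 - A1) v, v⟫_ℂ = (t : ℂ) := by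
  have hc : IsCompactOperator (A2 - A1 : X →L[ℂ] X) := hA2c.sub hA1c
  have hs : ((A2 - A1 : X →L[ℂ] X) : X →ₗ[ℂ] X).IsSymmetric := (hA2s.sub hA1s).isSymmetric
  generalize (A2 - A1 : X →L[ℂ] X) = K at hc hs ⊢
  constructor
  · intro h
    refine ⟨_, h, fun v hv => ⟨(⟪K v, v⟫_ℂ).re, ?_, ?_⟩⟩
    · have hcl : IsClosed {v : X | 0 ≤ (⟪K v, v⟫_ℂ).re} :=
        isClosed_le continuous_const (by fun_prop)
      refine closure_minimal (fun x hx => ?_) hcl (negSpan_orthogonal_le hc hs hv)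
      obtain ⟨f, -, -, hf⟩ := exists_eigen_decomposition hs (fun μ => 0 ≤ μ) hx
      refine hf.ge.trans' ?_
      exact Finset.sum_nonneg fun μ _ => mul_nonneg μ.2 (by positivity)
    · exact (Complex.conj_eq_iff_re.1 ((inner_conj_symm _ _).trans (hs v v).symm)).symm
  · rintro ⟨V, hV, hpos⟩
    have : FiniteDimensional ℂ V :=
      Module.rank_lt_aleph0_iff.1 (hV.trans_lt Cardinal.natCast_lt_aleph0)
    refine le_trans (LinearMap.rank_le_of_injective
      ((V.orthogonalProjectionOnto : X →ₗ[ℂ] V).domRestrict _) ?_) hV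
    rw [injective_iff_map_eq_zero]
    rintro ⟨v, hv⟩ h0
    obtain ⟨t, ht, hvt⟩ := hpos v (Submodule.orthogonalProjectionOnto_eq_zero_iff.1 h0)
    obtain ⟨f, -, hfv, hf⟩ := exists_eigen_decomposition hs (fun μ => μ < 0) hv
    -- a nonnegative sum of the nonpositive terms `μ ‖f μ‖²` forces each of them to vanish
    have hle : ∀ μ ∈ f.support, (μ : ℝ) * ‖f μ‖ ^ 2 ≤ 0 := fun μ _ =>
      mul_nonpos_of_nonpos_of_nonneg μ.2.le (by positivity)
    have hsum : ∑ μ ∈ f.support, (μ : ℝ) * ‖f μ‖ ^ 2 = 0 := by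
      refine le_antisymm (Finset.sum_nonpos hle) ?_
      rw [← hf]
      simpa [hvt] using ht
    rw [Finset.sum_eq_zero_iff_of_nonpos hle] at hsum
    refine Subtype.ext (hfv.trans (Finset.sum_eq_zero fun μ hμ => ?_))
    simpa [μ.2.ne] using hsum μ hμ
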